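/- Let {η_k : k∈ℤ₊²} be uniformly bounded random variables and suppose that for some ϵ>0, Var( (1/(log n₁ log n₂)) Σ_{k∈R_n} η_k/(k₁k₂) ) = O( (log log n₁ · log log n₂)^{−(1+ϵ)} ) as n→∞. Then (1/(log n₁ log n₂)) Σ_{k∈R_n} (η_k − E η_k)/(k₁k₂) → 0 almost surely as n→∞. -/

import Mathlib

open MeasureTheory ProbabilityTheory Filter Real Finset Asymptotics

noncomputable section

namespace RandomFieldMissing

/-- The index set `ℤ₊²` (we use `ℕ × ℕ`, with the relevant indices having positive
coordinates). -/
abbrev Idx : Type := ℕ × ℕ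

/-- The rectangle `R_n = {1,…,n₁} × {1,…,n₂}`. -/
def Rn (n : Idx) : Finset Idx := Finset.Icc (1, 1) n

open scoped Classical in
/-- A classical real-valued indicator of a proposition. -/
def ind (P : Prop) : ℝ := if P then 1 else 0

variable {Ω : Type*} [MeasurableSpace Ω]

/-- `γ(f) = inf {x ∈ ℝ : P(f ≤ x) > 0}`, the left endpoint of the support of `f`. -/
def leftEnd (μ : Measure Ω) (f : Ω → ℝ) : ℝ := sInf {x : ℝ | 0 < μ {ω | f ω ≤ x}}

/-- The observed variable `X_i(ε) = (1 - ε_i) γ(X_i) + ε_i X_i`. -/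
def obs (μ : Measure Ω) (X : Idx → Ω → ℝ) (eps : Idx → Ω → ℝ) (i : Idx) (ω : Ω) : ℝ :=
  (1 - eps i ω) * leftEnd μ (X i) + eps i ω * X i ω

/-- Tail probability `P(X_i > w_i)`. -/
def tailP (μ : Measure Ω) (X : Idx → Ω → ℝ) (w : Idx → ℝ) (i : Idx) : ℝ :=
  (μ {ω | w i < X i ω}).toReal

/-- Probability of the joint lower event with levels `u` on `A` and `v` on `B`. -/
def puv (μ : Measure Ω) (X : Idx → Ω → ℝ) (u v : Idx → ℝ) (A B : Finset Idx) : ℝ :=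
  (μ {ω | (∀ i ∈ A, X i ω ≤ u i) ∧ (∀ j ∈ B, X j ω ≤ v j)}).toReal

/-- The distance of the first (resp. second) coordinate projections of `I` and `J`
is at least `m.1` (resp. `m.2`). -/
def sep (I J : Finset Idx) (m : Idx) : Prop :=
  (∀ a ∈ I, ∀ b ∈ J, m.1 ≤ max a.1 b.1 - min a.1 b.1) ∨
  (∀ a ∈ I, ∀ b ∈ J, m.2 ≤ max a.2 b.2 - min a.2 b.2)

/-- `I` is a union of members of the family `𝒦` of partition rectangles. -/
def IsUnionOf (𝒦 : Finset (Finset Idx)) (I : Finset Idx) : Prop :=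
  ∃ S ⊆ 𝒦, I = S.sup id

/-- The mixing coefficient `α_{n,m₁,m₂}` of condition `D(u_{n,i}, v_{n,i})`: the supremum,
over pairs `(I, J)` of unions of partition rectangles whose first-coordinate projections are
at distance `≥ m₁` or whose second-coordinate projections are at distance `≥ m₂`, and over
splittings `I = I₁ ∪ I₂`, `J = J₁ ∪ J₂` into disjoint pieces, of
`|P(∩_{I₁∪J₁}{X ≤ u} ∩ ∩_{I₂∪J₂}{X ≤ v}) - P(∩_{I₁}{X ≤ u} ∩ ∩_{I₂}{X ≤ v}) ·
P(∩_{J₁}{X ≤ u} ∩ ∩_{J₂}{X ≤ v})|`. -/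
def alphaMix (μ : Measure Ω) (X : Idx → Ω → ℝ) (u v : Idx → ℝ)
    (𝒦 : Finset (Finset Idx)) (m : Idx) : ℝ :=
  ⨆ p : {p : (Finset Idx × Finset Idx) × (Finset Idx × Finset Idx) //
      IsUnionOf 𝒦 (p.1.1 ∪ p.1.2) ∧ IsUnionOf 𝒦 (p.2.1 ∪ p.2.2) ∧
      Disjoint p.1.1 p.1.2 ∧ Disjoint p.2.1 p.2.2 ∧
      sep (p.1.1 ∪ p.1.2) (p.2.1 ∪ p.2.2) m},
    |puv μ X u v ((p : (Finset Idx × Finset Idx) × (Finset Idx × Finset Idx)).1.1 ∪ p.1.2.1)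
        (p.1.1.2 ∪ p.1.2.2) -
      puv μ X u v p.1.1.1 p.1.1.2 * puv μ X u v p.1.2.1 p.1.2.2|

/-- The data of condition `D(u_{n,i}, v_{n,i})`: for each `n`, a partition of `R_n` into
`k_{n₁} k_{n₂}` disjoint rectangles along which the exceedance mass is asymptotically
equidistributed, with `k_{n₁}, k_{n₂} → ∞` and `k_{n_i} m_{n_i}/n_i → 0`. -/
structure PartitionScheme (μ : Measure Ω) (X : Idx → Ω → ℝ) (u v : Idx → Idx → ℝ) where
  k1 : ℕ → ℕ
  k2 : ℕ → ℕ
  m1 : ℕ → ℕ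
  m2 : ℕ → ℕ
  K : Idx → Finset (Finset Idx)
  cover : ∀ n, (K n).sup id = Rn n
  disj : ∀ n, ∀ A ∈ K n, ∀ B ∈ K n, A ≠ B → Disjoint A B
  rect : ∀ n, ∀ A ∈ K n, ∃ a b : Idx, A = Finset.Icc a b
  card_eq : ∀ n : Idx, (K n).card = k1 n.1 * k2 n.2
  k1_top : Tendsto k1 atTop atTop
  k2_top : Tendsto k2 atTop atTop
  km1 : Tendsto (fun j : ℕ => (k1 j * m1 j : ℝ) / j) atTop (nhds 0)
  km2 : Tendsto (fun j : ℕ => (k2 j * m2 j : ℝ) / j) atTop (nhds 0)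
  equalMass : ∀ w : Idx → Idx → ℝ, w = u ∨ w = v →
    ∀ As : Idx → Finset Idx, (∀ n, As n ∈ K n) →
      Tendsto (fun n : Idx => ∑ i ∈ As n, tailP μ X (w n) i
        - (∑ i ∈ Rn n, tailP μ X (w n) i) / (k1 n.1 * k2 n.2)) atTop (nhds 0)

/-- Condition `D(u_{n,i}, v_{n,i})`: `k_{n₁} k_{n₂} α_{n, m_{n₁}, m_{n₂}} → 0`. -/
def CondD {μ : Measure Ω} {X : Idx → Ω → ℝ} {u v : Idx → Idx → ℝ}
    (S : PartitionScheme μ X u v) : Prop :=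
  Tendsto (fun n : Idx => (S.k1 n.1 * S.k2 n.2 : ℝ) *
    alphaMix μ X (u n) (v n) (S.K n) (S.m1 n.1, S.m2 n.2)) atTop (nhds 0)

/-- Condition `D'(v_{n,i})`: for each (choice of) partition rectangle `I`,
`k_{n₁} k_{n₂} ∑_{i ≠ j ∈ I} P(X_i > v_{n,i}, X_j > v_{n,j}) → 0`. -/
def CondD' {μ : Measure Ω} {X : Idx → Ω → ℝ} {u v : Idx → Idx → ℝ}
    (S : PartitionScheme μ X u v) : Prop :=
  ∀ As : Idx → Finset Idx, (∀ n, As n ∈ S.K n) →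
    Tendsto (fun n : Idx => (S.k1 n.1 * S.k2 n.2 : ℝ) *
      ∑ i ∈ As n, ∑ j ∈ (As n).erase i,
        (μ {ω | v n i < X i ω ∧ v n j < X j ω}).toReal) atTop (nhds 0)

/-- The set `M_{kn} = {j ∈ ℕ² : 0 ≤ j_i ≤ #(π_i(R_k ∩ R_n)) + m_{n_i}, i = 1,2}`. -/
def Mkn (k n m : Idx) : Finset Idx :=
  Finset.Icc (0, 0) (((Rn k ∩ Rn n).image Prod.fst).card + m.1,
    ((Rn k ∩ Rn n).image Prod.snd).card + m.2)

/-- The mixing coefficient `α*_{n,k,m₁,m₂}` of condition `D*`: the supremum over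
`I₁ ⊆ R_k`, `I₂ ⊆ R_n ∖ M_{kn}` of
`|P(∩_{I₁}{X ≤ v_k} ∩ ∩_{R_k}{X ≤ u_k} ∩ ∩_{I₂}{X ≤ v_n} ∩ ∩_{R_n∖M_{kn}}{X ≤ u_n})
 - P(∩_{I₁}{X ≤ v_k} ∩ ∩_{R_k}{X ≤ u_k}) · P(∩_{I₂}{X ≤ v_n} ∩ ∩_{R_n∖M_{kn}}{X ≤ u_n})|`. -/
def alphaStar (μ : Measure Ω) (X : Idx → Ω → ℝ) (uk vk un vn : Idx → ℝ)
    (k n m : Idx) : ℝ :=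
  ⨆ p : {p : Finset Idx × Finset Idx // p.1 ⊆ Rn k ∧ p.2 ⊆ Rn n \ Mkn k n m},
    |(μ {ω | (∀ i ∈ (p : Finset Idx × Finset Idx).1, X i ω ≤ vk i) ∧
        (∀ j ∈ Rn k, X j ω ≤ uk j) ∧ (∀ i ∈ p.1.2, X i ω ≤ vn i) ∧
        (∀ j ∈ Rn n \ Mkn k n m, X j ω ≤ un j)}).toReal -
      (μ {ω | (∀ i ∈ (p : Finset Idx × Finset Idx).1, X i ω ≤ vk i) ∧
        (∀ j ∈ Rn k, X j ω ≤ uk j)}).toReal *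
      (μ {ω | (∀ i ∈ p.1.2, X i ω ≤ vn i) ∧
        (∀ j ∈ Rn n \ Mkn k n m, X j ω ≤ un j)}).toReal|

/-- Condition `D*(u_{k,j}, v_{k,i}, u_{n,j}, v_{n,i})` with exponent `e > 0`:
there exist `m_{n₁}, m_{n₂} → ∞` with `m_{n_i}/n_i → 0` such that
`sup_{k₁k₂ < n₁n₂} α*_{n,k,m_{n₁},m_{n₂}} = O((log log n₁ · log log n₂)^{-(1+e)})`. -/
def CondDstar (μ : Measure Ω) (X : Idx → Ω → ℝ) (u v : Idx → Idx → ℝ) (e : ℝ) : Prop :=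
  ∃ m1 m2 : ℕ → ℕ, Tendsto m1 atTop atTop ∧ Tendsto m2 atTop atTop ∧
    Tendsto (fun j : ℕ => (m1 j : ℝ) / j) atTop (nhds 0) ∧
    Tendsto (fun j : ℕ => (m2 j : ℝ) / j) atTop (nhds 0) ∧
    (fun n : Idx => ⨆ k : {k : Idx // k.1 * k.2 < n.1 * n.2},
        alphaStar μ X (u k) (v k) (u n) (v n) k n (m1 n.1, m2 n.2)) =O[atTop]
      fun n : Idx => (Real.log (Real.log n.1) * Real.log (Real.log n.2)) ^ (-(1 + e))

/-- The standard normal distribution function `Φ`. -/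
def Phi (x : ℝ) : ℝ := (gaussianReal 0 1 (Set.Iic x)).toReal

/-- The componentwise distance `|i - j|` of two indices. -/
def idxDist (i j : Idx) : Idx := (max i.1 j.1 - min i.1 j.1, max i.2 j.2 - min i.2 j.2)

/-- `Y` is a jointly Gaussian random field with mean `0`, variance `1` and
covariances `r i j`: every finite linear combination is centered Gaussian with the
corresponding variance. -/
def IsStdGaussianField (μ : Measure Ω) (Y : Idx → Ω → ℝ) (r : Idx → Idx → ℝ) : Prop :=
  (∀ i, r i i = 1) ∧
  ∀ (s : Finset Idx) (c : Idx → ℝ),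
    Measure.map (fun ω => ∑ i ∈ s, c i * Y i ω) μ =
      gaussianReal 0 (Real.toNNReal (∑ i ∈ s, ∑ j ∈ s, c i * c j * r i j))

/-- `|r_{i,j}| < ρ_{|i-j|}` for `i ≠ j`, with `ρ_m < 1` for `m ≠ 0`. -/
def CovDominated (r : Idx → Idx → ℝ) (ρ : Idx → ℝ) : Prop :=
  (∀ m : Idx, m ≠ 0 → ρ m < 1) ∧ ∀ i j : Idx, i ≠ j → |r i j| < ρ (idxDist i j)

/-- Condition (21): `ρ_{(m,0)} log m` and `ρ_{(0,m)} log m` are bounded and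
`ρ_m log (m₁ m₂) → 0`. -/
def Cond21 (ρ : Idx → ℝ) : Prop :=
  (∃ C, ∀ m : ℕ, |ρ (m, 0) * Real.log m| ≤ C) ∧
  (∃ C, ∀ m : ℕ, |ρ (0, m) * Real.log m| ≤ C) ∧
  Tendsto (fun m : Idx => ρ m * Real.log ((m.1 : ℝ) * m.2)) atTop (nhds 0)

/-- Condition (t21): for some `e > 0`, `ρ_{(m,0)} log m = O((log log m)^{-(1+e)})`,
`ρ_{(0,m)} log m = O((log log m)^{-(1+e)})` and
`ρ_m log (m₁ m₂) = O((log log m₁ · log log m₂)^{-(1+e)})`. -/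
def CondT21 (ρ : Idx → ℝ) : Prop :=
  ∃ e > (0 : ℝ),
    ((fun m : ℕ => ρ (m, 0) * Real.log m) =O[atTop]
      fun m : ℕ => Real.log (Real.log m) ^ (-(1 + e))) ∧
    ((fun m : ℕ => ρ (0, m) * Real.log m) =O[atTop]
      fun m : ℕ => Real.log (Real.log m) ^ (-(1 + e))) ∧
    ((fun m : Idx => ρ m * Real.log ((m.1 : ℝ) * m.2)) =O[atTop]
      fun m : Idx => (Real.log (Real.log m.1) * Real.log (Real.log m.2)) ^ (-(1 + e)))

/-- The maximum of `f` over a finite index set (junk value `0` if the set is empty). -/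
def finMax (s : Finset Idx) (f : Idx → ℝ) : ℝ := if h : s.Nonempty then s.sup' h f else 0

/-- `a_n = √(2 log (n₁ n₂))`. -/
def aN (n : Idx) : ℝ := Real.sqrt (2 * Real.log ((n.1 : ℝ) * n.2))

/-- `b_n = a_n - (log log (n₁ n₂) + log (4π)) / (2 a_n)`. -/
def bN (n : Idx) : ℝ :=
  aN n - (Real.log (Real.log ((n.1 : ℝ) * n.2)) + Real.log (4 * π)) / (2 * aN n)

/-- `a_n* = a_n - log log (n₁ n₂) / (2 a_n)`. -/
def aStarN (n : Idx) : ℝ := aN n - Real.log (Real.log ((n.1 : ℝ) * n.2)) / (2 * aN n)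

/-- The `r`-th largest of the `d` values `f 0, …, f (d-1)`. -/
def kthLargest {d : ℕ} (f : Fin d → ℝ) (r : ℕ) : ℝ :=
  (List.insertionSort (· ≥ ·) (List.ofFn f)).getD (r - 1) 0

/-! ### Almost sure convergence from summable variances -/

theorem ae_tendsto_sub_integral_cofinite_of_tsum_evariance_ne_top {ι : Type*} [Countable ι]
    {μ : Measure Ω} {Y : ι → Ω → ℝ} (hY : ∀ i, AEMeasurable (Y i) μ)
    (hsum : ∑' i, evariance (Y i) μ ≠ ⊤) :
    ∀ᵐ ω ∂μ, Tendsto (fun i => Y i ω - ∫ ω', Y i ω' ∂μ) cofinite (nhds 0) := by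
  have hmeas : ∀ i, AEMeasurable (fun ω => ‖Y i ω - ∫ ω', Y i ω' ∂μ‖ₑ ^ 2) μ :=
    fun i => ((hY i).sub_const _).enorm.pow_const 2
  have hfin : ∫⁻ ω, ∑' i, ‖Y i ω - ∫ ω', Y i ω' ∂μ‖ₑ ^ 2 ∂μ ≠ ⊤ := by
    rw [lintegral_tsum hmeas]
    exact hsum
  filter_upwards [ae_lt_top' (AEMeasurable.tsum hmeas) hfin] with ω hω
  have hsq := ENNReal.tendsto_cofinite_zero_of_tsum_ne_top hω.ne
  have hsq' : Tendsto (fun i => (Y i ω - ∫ ω', Y i ω' ∂μ) ^ 2) cofinite (nhds 0) := by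
    have := (ENNReal.tendsto_toReal ENNReal.zero_ne_top).comp hsq
    simpa [Function.comp_def] using this
  rw [tendsto_zero_iff_abs_tendsto_zero]
  simpa [Function.comp_def, Real.sqrt_sq_eq_abs] using
    (Real.continuous_sqrt.tendsto 0).comp hsq'

theorem memLp_const_mul_sum_div {ι : Type*} {μ : Measure Ω} {X : ι → Ω → ℝ} {p : ENNReal}
    (c : ℝ) (s : Finset ι) (w : ι → ℝ) (hX : ∀ k, MemLp (X k) p μ) :
    MemLp (fun ω => c * ∑ k ∈ s, X k ω / w k) p μ := by
  simp only [div_eq_mul_inv]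
  exact (memLp_finsetSum s fun k _ => (hX k).mul_const (w k)⁻¹).const_mul c

theorem const_mul_sum_div_sub_integral {ι : Type*} {μ : Measure Ω} {X : ι → Ω → ℝ}
    (c : ℝ) (s : Finset ι) (w : ι → ℝ) (hX : ∀ k, Integrable (X k) μ) (ω : Ω) :
    c * ∑ k ∈ s, X k ω / w k - ∫ ω', c * ∑ k ∈ s, X k ω' / w k ∂μ =
      c * ∑ k ∈ s, (X k ω - ∫ ω', X k ω' ∂μ) / w k := by
  rw [integral_const_mul, integral_finsetSum _ fun k _ => (hX k).div_const _]
  simp only [integral_div, sub_div, Finset.sum_sub_distrib, mul_sub]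

/-! ### Harmonic sums over rectangles -/

theorem Rn_mono {m n : Idx} (h : m ≤ n) : Rn m ⊆ Rn n := Finset.Icc_subset_Icc le_rfl h

theorem sum_Rn_one_div (n : Idx) :
    ∑ k ∈ Rn n, 1 / ((k.1 : ℝ) * k.2) = (harmonic n.1 : ℝ) * harmonic n.2 := by
  have h : ∀ N : ℕ, (harmonic N : ℝ) = ∑ i ∈ Finset.Icc 1 N, (i : ℝ)⁻¹ := by
    intro N
    rw [harmonic_eq_sum_Icc]
    push_cast
    rfl
  rw [h, h, Finset.sum_mul_sum, ← Finset.sum_product']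
  refine Finset.sum_congr rfl fun k _ => ?_
  rw [one_div, mul_inv]

theorem abs_sum_Rn_sub_le {x : Idx → ℝ} {C : ℝ} (hx : ∀ k, |x k| ≤ C) {m n : Idx} (h : m ≤ n) :
    |∑ k ∈ Rn n, x k / ((k.1 : ℝ) * k.2) - ∑ k ∈ Rn m, x k / ((k.1 : ℝ) * k.2)| ≤
      C * ((harmonic n.1 : ℝ) * harmonic n.2 - (harmonic m.1 : ℝ) * harmonic m.2) := by
  rw [← Finset.sum_sdiff_eq_sub (Rn_mono h), ← sum_Rn_one_div, ← sum_Rn_one_div,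
    ← Finset.sum_sdiff_eq_sub (Rn_mono h), Finset.mul_sum]
  refine (Finset.abs_sum_le_sum_abs _ _).trans (Finset.sum_le_sum fun k _ => ?_)
  rw [abs_div, abs_of_nonneg (by positivity : (0 : ℝ) ≤ (k.1 : ℝ) * k.2), mul_one_div]
  gcongr
  exact hx k

theorem harmonic_real_mono {m n : ℕ} (h : m ≤ n) : (harmonic m : ℝ) ≤ harmonic n := by
  have : harmonic m ≤ harmonic n :=
    Finset.sum_le_sum_of_subset_of_nonneg (Finset.range_mono h) fun _ _ _ => by positivity
  exact_mod_cast this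

theorem harmonic_real_nonneg (n : ℕ) : (0 : ℝ) ≤ harmonic n := by
  simpa using harmonic_real_mono (Nat.zero_le n)

theorem tendsto_harmonic_div_log :
    Tendsto (fun n : ℕ => (harmonic n : ℝ) / Real.log n) atTop (nhds 1) := by
  have hlog : Tendsto (fun n : ℕ => Real.log n) atTop atTop :=
    Real.tendsto_log_atTop.comp tendsto_natCast_atTop_atTop
  have hup : Tendsto (fun n : ℕ => (Real.log n)⁻¹ + 1) atTop (nhds 1) := by
    simpa using (tendsto_inv_atTop_zero.comp hlog).add_const 1
  refine tendsto_of_tendsto_of_tendsto_of_le_of_le' tendsto_const_nhds hup ?_ ?_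
  · filter_upwards [hlog.eventually_gt_atTop 0, eventually_gt_atTop 0] with n hn hn0
    rw [one_le_div hn]
    refine le_trans ?_ (log_add_one_le_harmonic n)
    exact Real.log_le_log (by exact_mod_cast hn0) (by exact_mod_cast Nat.le_succ n)
  · filter_upwards [hlog.eventually_gt_atTop 0] with n hn
    rw [div_le_iff₀ hn, add_mul, inv_mul_cancel₀ hn.ne', one_mul]
    exact harmonic_le_one_add_log n

/-! ### Interpolation between the points of a sparse subsequence -/

theorem exists_le_lt_succ_of_tendsto_atTop {a : ℕ → ℕ} (hmono : Monotone a)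
    (htop : Tendsto a atTop atTop) {N n : ℕ} (hn : a N ≤ n) :
    ∃ j, N ≤ j ∧ a j ≤ n ∧ n < a (j + 1) := by
  classical
  have hex : ∃ j, n < a j := (htop.eventually_gt_atTop n).exists
  have hspec := Nat.find_spec hex
  have hlt : N < Nat.find hex := by
    by_contra! h
    exact absurd (hspec.trans_le (hmono h)) (not_lt.mpr hn)
  obtain ⟨j, hj⟩ : ∃ j, Nat.find hex = j + 1 := ⟨Nat.find hex - 1, by omega⟩
  refine ⟨j, by omega, ?_, hj ▸ hspec⟩
  exact not_lt.mp (Nat.find_min hex (by omega))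

/-- If logarithmic averages of a bounded array vanish along a product grid whose consecutive
points have asymptotically equal logarithms, then they vanish along all indices. -/
theorem tendsto_logAverage_of_tendsto_subseq {x : Idx → ℝ} {C : ℝ} (hx : ∀ k, |x k| ≤ C)
    {a : ℕ → ℕ} (hmono : Monotone a) (htop : Tendsto a atTop atTop) (hone : ∀ j, 1 < a j)
    (hratio : Tendsto (fun j => Real.log (a (j + 1)) / Real.log (a j)) atTop (nhds 1))
    (hsub : Tendsto (fun p : ℕ × ℕ => (1 / (Real.log (a p.1) * Real.log (a p.2))) *
      ∑ k ∈ Rn (a p.1, a p.2), x k / ((k.1 : ℝ) * k.2)) atTop (nhds 0)) :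
    Tendsto (fun n : Idx => (1 / (Real.log n.1 * Real.log n.2)) *
      ∑ k ∈ Rn n, x k / ((k.1 : ℝ) * k.2)) atTop (nhds 0) := by
  have hC : 0 ≤ C := (abs_nonneg _).trans (hx 0)
  have hL : ∀ j, 0 < Real.log (a j) := fun j => Real.log_pos (by exact_mod_cast hone j)
  set u : ℕ → ℝ := fun j => (harmonic (a j) : ℝ) / Real.log (a j) with hu_def
  set v : ℕ → ℝ := fun j => (harmonic (a (j + 1)) : ℝ) / Real.log (a j) with hv_def
  have hu : Tendsto u atTop (nhds 1) := tendsto_harmonic_div_log.comp htop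
  have hv : Tendsto v atTop (nhds 1) := by
    have h := ((tendsto_add_atTop_iff_nat 1).mpr hu).mul hratio
    rw [one_mul] at h
    refine h.congr fun j => ?_
    simp only [hu_def, hv_def]
    field_simp [(hL j).ne', (hL (j + 1)).ne']
  have hfst : Tendsto (Prod.fst : ℕ × ℕ → ℕ) atTop atTop := by
    rw [← prod_atTop_atTop_eq]; exact tendsto_fst
  have hsnd : Tendsto (Prod.snd : ℕ × ℕ → ℕ) atTop atTop := by
    rw [← prod_atTop_atTop_eq]; exact tendsto_snd
  have hG : Tendsto (fun p : ℕ × ℕ => |(1 / (Real.log (a p.1) * Real.log (a p.2))) *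
      ∑ k ∈ Rn (a p.1, a p.2), x k / ((k.1 : ℝ) * k.2)| +
      C * (v p.1 * v p.2 - u p.1 * u p.2)) atTop (nhds 0) := by
    have h := hsub.abs.add ((((hv.comp hfst).mul (hv.comp hsnd)).sub
      ((hu.comp hfst).mul (hu.comp hsnd))).const_mul C)
    simpa using h
  rw [Metric.tendsto_atTop]
  intro ε hε
  obtain ⟨N, hN⟩ := eventually_atTop.mp (hG.eventually (gt_mem_nhds hε))
  refine ⟨(a N.1, a N.2), fun n hn => ?_⟩
  obtain ⟨i, hNi, hi, hi'⟩ := exists_le_lt_succ_of_tendsto_atTop hmono htop hn.1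
  obtain ⟨j, hNj, hj, hj'⟩ := exists_le_lt_succ_of_tendsto_atTop hmono htop hn.2
  have hlt := hN (i, j) ⟨hNi, hNj⟩
  rw [Real.dist_0_eq_abs]
  refine lt_of_le_of_lt ?_ hlt
  have hai : (0 : ℝ) < a i := by exact_mod_cast (hone i).le
  have haj : (0 : ℝ) < a j := by exact_mod_cast (hone j).le
  have hprod : Real.log (a i) * Real.log (a j) ≤ Real.log n.1 * Real.log n.2 :=
    mul_le_mul (Real.log_le_log hai (by exact_mod_cast hi))
      (Real.log_le_log haj (by exact_mod_cast hj)) (hL j).le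
      ((hL i).le.trans (Real.log_le_log hai (by exact_mod_cast hi)))
  have hpos : 0 < Real.log (a i) * Real.log (a j) := mul_pos (hL i) (hL j)
  have hdiff := abs_sum_Rn_sub_le hx (m := (a i, a j)) (n := n) ⟨hi, hj⟩
  have hharm : (harmonic n.1 : ℝ) * harmonic n.2 ≤
      (harmonic (a (i + 1)) : ℝ) * harmonic (a (j + 1)) :=
    mul_le_mul (harmonic_real_mono hi'.le) (harmonic_real_mono hj'.le)
      (harmonic_real_nonneg _) (harmonic_real_nonneg _)
  set S := ∑ k ∈ Rn n, x k / ((k.1 : ℝ) * k.2)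
  set T := ∑ k ∈ Rn (a i, a j), x k / ((k.1 : ℝ) * k.2)
  have hS : |S| ≤ |T| + C * ((harmonic (a (i + 1)) : ℝ) * harmonic (a (j + 1)) -
      (harmonic (a i) : ℝ) * harmonic (a j)) := by
    have h1 := abs_sub_abs_le_abs_sub S T
    have h2 := mul_le_mul_of_nonneg_left hharm hC
    simp only [mul_sub] at hdiff ⊢
    linarith
  calc |1 / (Real.log n.1 * Real.log n.2) * S|
      = |S| / (Real.log n.1 * Real.log n.2) := by
        rw [abs_mul, abs_of_pos (one_div_pos.mpr (hpos.trans_le hprod)), one_div_mul_eq_div]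
    _ ≤ |S| / (Real.log (a i) * Real.log (a j)) := by gcongr
    _ ≤ (|T| + C * ((harmonic (a (i + 1)) : ℝ) * harmonic (a (j + 1)) -
          (harmonic (a i) : ℝ) * harmonic (a j))) / (Real.log (a i) * Real.log (a j)) := by
        gcongr
    _ = |1 / (Real.log (a i) * Real.log (a j)) * T| + C * (v i * v j - u i * u j) := by
        rw [abs_mul, abs_of_pos (one_div_pos.mpr hpos)]
        have := (hL i).ne'
        have := (hL j).ne'
        simp only [hu_def, hv_def]
        field_simp

/-! ### A doubly exponential subsequence -/

theorem tendsto_rpow_succ_sub_rpow {d : ℝ} (hd0 : 0 < d) (hd1 : d < 1) :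
    Tendsto (fun j : ℕ => ((j + 1 : ℕ) : ℝ) ^ d - (j : ℝ) ^ d) atTop (nhds 0) := by
  have hup : Tendsto (fun j : ℕ => d * (j : ℝ) ^ (-(1 - d))) atTop (nhds 0) := by
    simpa using ((tendsto_rpow_neg_atTop (sub_pos.mpr hd1)).comp
      tendsto_natCast_atTop_atTop).const_mul d
  refine tendsto_of_tendsto_of_tendsto_of_le_of_le' tendsto_const_nhds hup ?_ ?_
  · refine Eventually.of_forall fun j => sub_nonneg.mpr ?_
    exact Real.rpow_le_rpow (by positivity) (by exact_mod_cast Nat.le_succ j) hd0.le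
  · filter_upwards [eventually_gt_atTop 0] with j hj
    have hj' : (0 : ℝ) < j := by exact_mod_cast hj
    have hB := rpow_one_add_le_one_add_mul_self (s := (j : ℝ)⁻¹)
      (by linarith [inv_pos.mpr hj']) hd0.le hd1.le
    have hsplit : ((j + 1 : ℕ) : ℝ) = j * (1 + (j : ℝ)⁻¹) := by
      push_cast
      field_simp
    rw [hsplit, Real.mul_rpow hj'.le (by positivity),
      show -(1 - d) = d - 1 by ring, Real.rpow_sub_one hj'.ne']
    have := mul_le_mul_of_nonneg_left hB (Real.rpow_nonneg hj'.le d)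
    calc (j : ℝ) ^ d * (1 + (j : ℝ)⁻¹) ^ d - (j : ℝ) ^ d
        ≤ (j : ℝ) ^ d * (1 + d * (j : ℝ)⁻¹) - (j : ℝ) ^ d := by linarith
      _ = d * ((j : ℝ) ^ d / j) := by ring

/-- The sequence `⌈exp (exp (j ^ d))⌉`. -/
def expExpSeq (d : ℝ) (j : ℕ) : ℕ := ⌈Real.exp (Real.exp ((j : ℝ) ^ d))⌉₊

theorem exp_rpow_le_log_expExpSeq (d : ℝ) (j : ℕ) :
    Real.exp ((j : ℝ) ^ d) ≤ Real.log (expExpSeq d j) := by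
  rw [← Real.log_exp (Real.exp ((j : ℝ) ^ d))]
  exact Real.log_le_log (Real.exp_pos _) (Nat.le_ceil _)

theorem log_expExpSeq_le (d : ℝ) (j : ℕ) :
    Real.log (expExpSeq d j) ≤ Real.exp ((j : ℝ) ^ d) + Real.log 2 := by
  have h1 : (1 : ℝ) ≤ Real.exp (Real.exp ((j : ℝ) ^ d)) :=
    Real.one_le_exp (Real.exp_pos _).le
  have hle : (expExpSeq d j : ℝ) ≤ Real.exp (Real.exp ((j : ℝ) ^ d)) * 2 := by
    have := Nat.ceil_lt_add_one (Real.exp_pos (Real.exp ((j : ℝ) ^ d))).le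
    unfold expExpSeq
    linarith
  have hpos : (0 : ℝ) < expExpSeq d j := (Real.exp_pos _).trans_le (Nat.le_ceil _)
  calc Real.log (expExpSeq d j)
      ≤ Real.log (Real.exp (Real.exp ((j : ℝ) ^ d)) * 2) := Real.log_le_log hpos hle
    _ = Real.exp ((j : ℝ) ^ d) + Real.log 2 := by
      rw [Real.log_mul (Real.exp_pos _).ne' two_ne_zero, Real.log_exp]

theorem rpow_le_log_log_expExpSeq (d : ℝ) (j : ℕ) :
    (j : ℝ) ^ d ≤ Real.log (Real.log (expExpSeq d j)) := by
  rw [← Real.log_exp ((j : ℝ) ^ d)]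
  exact Real.log_le_log (Real.exp_pos _) (exp_rpow_le_log_expExpSeq d j)

theorem log_log_expExpSeq_nonneg (d : ℝ) (j : ℕ) :
    0 ≤ Real.log (Real.log (expExpSeq d j)) :=
  (Real.rpow_nonneg j.cast_nonneg d).trans (rpow_le_log_log_expExpSeq d j)

theorem log_log_expExpSeq_mul_rpow_neg_le {d s : ℝ} (hs : 0 ≤ s) {i j : ℕ} (hi : 0 < i)
    (hj : 0 < j) :
    (Real.log (Real.log (expExpSeq d i)) * Real.log (Real.log (expExpSeq d j))) ^ (-s) ≤
      ((i : ℝ) ^ (d * s))⁻¹ * ((j : ℝ) ^ (d * s))⁻¹ := by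
  have hi' : (0 : ℝ) < (i : ℝ) ^ d := Real.rpow_pos_of_pos (by exact_mod_cast hi) d
  have hj' : (0 : ℝ) < (j : ℝ) ^ d := Real.rpow_pos_of_pos (by exact_mod_cast hj) d
  refine (Real.rpow_le_rpow_of_nonpos (mul_pos hi' hj')
    (mul_le_mul (rpow_le_log_log_expExpSeq d i) (rpow_le_log_log_expExpSeq d j) hj'.le
      (log_log_expExpSeq_nonneg d i)) (neg_nonpos.mpr hs)).trans_eq ?_
  rw [Real.rpow_neg (mul_pos hi' hj').le, Real.mul_rpow hi'.le hj'.le,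
    ← Real.rpow_mul i.cast_nonneg, ← Real.rpow_mul j.cast_nonneg, mul_inv]

theorem one_lt_expExpSeq (d : ℝ) (j : ℕ) : 1 < expExpSeq d j :=
  Nat.lt_ceil.mpr (by simpa using Real.exp_pos ((j : ℝ) ^ d))

theorem expExpSeq_mono {d : ℝ} (hd : 0 < d) : Monotone (expExpSeq d) := fun i j hij => by
  unfold expExpSeq
  gcongr

theorem tendsto_expExpSeq {d : ℝ} (hd : 0 < d) : Tendsto (expExpSeq d) atTop atTop :=
  tendsto_nat_ceil_atTop.comp <| Real.tendsto_exp_atTop.comp <| Real.tendsto_exp_atTop.comp <|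
    (tendsto_rpow_atTop hd).comp tendsto_natCast_atTop_atTop

theorem tendsto_log_expExpSeq_ratio {d : ℝ} (hd0 : 0 < d) (hd1 : d < 1) :
    Tendsto (fun j => Real.log (expExpSeq d (j + 1)) / Real.log (expExpSeq d j))
      atTop (nhds 1) := by
  have hup : Tendsto (fun j : ℕ => Real.exp (((j + 1 : ℕ) : ℝ) ^ d - (j : ℝ) ^ d) +
      Real.log 2 * (Real.exp ((j : ℝ) ^ d))⁻¹) atTop (nhds 1) := by
    have h1 := (Real.continuous_exp.tendsto 0).comp (tendsto_rpow_succ_sub_rpow hd0 hd1)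
    have h2 : Tendsto (fun j : ℕ => (Real.exp ((j : ℝ) ^ d))⁻¹) atTop (nhds 0) :=
      tendsto_inv_atTop_zero.comp <| Real.tendsto_exp_atTop.comp <|
        (tendsto_rpow_atTop hd0).comp tendsto_natCast_atTop_atTop
    simpa [Function.comp_def] using h1.add (h2.const_mul (Real.log 2))
  have hL : ∀ j, 0 < Real.log (expExpSeq d j) := fun j =>
    (Real.exp_pos _).trans_le (exp_rpow_le_log_expExpSeq d j)
  refine tendsto_of_tendsto_of_tendsto_of_le_of_le tendsto_const_nhds hup ?_ ?_
  · intro j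
    change 1 ≤ Real.log (expExpSeq d (j + 1)) / Real.log (expExpSeq d j)
    rw [one_le_div (hL j)]
    exact Real.log_le_log (by exact_mod_cast (one_lt_expExpSeq d j).le)
      (by exact_mod_cast expExpSeq_mono hd0 (Nat.le_succ j))
  · intro j
    calc Real.log (expExpSeq d (j + 1)) / Real.log (expExpSeq d j)
        ≤ (Real.exp (((j + 1 : ℕ) : ℝ) ^ d) + Real.log 2) / Real.exp ((j : ℝ) ^ d) :=
          div_le_div₀ (add_nonneg (Real.exp_pos _).le (Real.log_nonneg one_le_two))
            (log_expExpSeq_le d (j + 1)) (Real.exp_pos _) (exp_rpow_le_log_expExpSeq d j)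
      _ = Real.exp (((j + 1 : ℕ) : ℝ) ^ d - (j : ℝ) ^ d) +
          Real.log 2 * (Real.exp ((j : ℝ) ^ d))⁻¹ := by
        rw [Real.exp_sub, add_div, div_eq_mul_inv (Real.log 2)]

/-- **Lemma 4.3** (Tan and Wang): summation-by-variance criterion for two-dimensional
almost sure limit theorems. -/
theorem variance_criterion_asclt
    {Ω : Type*} [MeasureSpace Ω] [IsProbabilityMeasure (ℙ : Measure Ω)]
    (η : Idx → Ω → ℝ) (M : ℝ)
    (hmeas : ∀ k, Measurable (η k))
    (hbdd : ∀ k : Idx, ∀ᵐ ω ∂ℙ, |η k ω| ≤ M)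
    (e : ℝ) (he : 0 < e)
    (hvar : (fun n : Idx => variance (fun ω => (1 / (Real.log n.1 * Real.log n.2)) *
        ∑ k ∈ Rn n, η k ω / ((k.1 : ℝ) * k.2)) ℙ) =O[atTop]
      fun n : Idx => (Real.log (Real.log n.1) * Real.log (Real.log n.2)) ^ (-(1 + e))) :
    ∀ᵐ ω ∂ℙ, Tendsto (fun n : Idx => (1 / (Real.log n.1 * Real.log n.2)) *
        ∑ k ∈ Rn n, (η k ω - ∫ ω', η k ω' ∂ℙ) / ((k.1 : ℝ) * k.2)) atTop (nhds 0) := by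
  have hd : ∃ d : ℝ, 0 < d ∧ d < 1 ∧ 1 < d * (1 + e) := by
    refine ⟨1 / (1 + e / 2), by positivity, ?_, ?_⟩
    · rw [div_lt_one (by positivity)]; linarith
    · rw [one_div_mul_eq_div, one_lt_div (by positivity)]; linarith
  obtain ⟨d, hd0, hd1, hde⟩ := hd
  obtain ⟨C, hC0, hC⟩ := hvar.exists_nonneg
  obtain ⟨N₀, hN₀⟩ := eventually_atTop.mp hC.bound
  obtain ⟨N, hN⟩ := eventually_atTop.mp
    ((tendsto_expExpSeq hd0).eventually_ge_atTop (max N₀.1 N₀.2))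
  set a : ℕ → ℕ := fun j => expExpSeq d (j + (N + 1)) with ha
  have ha_ge : ∀ j, max N₀.1 N₀.2 ≤ a j := fun j => hN _ (by omega)
  set Y : Idx → Ω → ℝ := fun n ω => (1 / (Real.log n.1 * Real.log n.2)) *
    ∑ k ∈ Rn n, η k ω / ((k.1 : ℝ) * k.2) with hY
  have hmem : ∀ k, MemLp (η k) 2 ℙ := fun k =>
    MemLp.of_bound (hmeas k).aestronglyMeasurable M (by simpa using hbdd k)
  have hint : ∀ k, Integrable (η k) ℙ := fun k => (hmem k).integrable one_le_two
  have hYmem : ∀ n, MemLp (Y n) 2 ℙ := fun n => memLp_const_mul_sum_div _ _ _ hmem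
  have hYcentered : ∀ n ω, Y n ω - ∫ ω', Y n ω' ∂ℙ = (1 / (Real.log n.1 * Real.log n.2)) *
      ∑ k ∈ Rn n, (η k ω - ∫ ω', η k ω' ∂ℙ) / ((k.1 : ℝ) * k.2) := fun n ω =>
    const_mul_sum_div_sub_integral _ _ _ hint ω
  let f : ℕ → ℝ := fun j => (((j + (N + 1) : ℕ) : ℝ) ^ (d * (1 + e)))⁻¹
  have hf : Summable f :=
    (Real.summable_nat_rpow_inv.mpr hde).comp_injective (add_left_injective (N + 1))
  have hf0 : ∀ j, 0 ≤ f j := fun j => by positivity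
  have hvarle : ∀ p : ℕ × ℕ, variance (Y (a p.1, a p.2)) ℙ ≤ C * (f p.1 * f p.2) := by
    intro p
    have hbound := hN₀ (a p.1, a p.2)
      ⟨(le_max_left _ _).trans (ha_ge p.1), (le_max_right _ _).trans (ha_ge p.2)⟩
    refine ((Real.le_norm_self _).trans hbound).trans (mul_le_mul_of_nonneg_left ?_ hC0)
    rw [Real.norm_of_nonneg (Real.rpow_nonneg (mul_nonneg (log_log_expExpSeq_nonneg d _)
      (log_log_expExpSeq_nonneg d _)) _)]
    exact log_log_expExpSeq_mul_rpow_neg_le (by linarith) (by omega) (by omega)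
  have hsum : ∑' p : ℕ × ℕ, evariance (Y (a p.1, a p.2)) ℙ ≠ ⊤ := by
    refine ne_top_of_le_ne_top
      ((hf.mul_of_nonneg hf hf0 hf0).mul_left C).tsum_ofReal_ne_top
      (ENNReal.tsum_le_tsum fun p => ?_)
    rw [← ofReal_variance (hYmem _)]
    exact ENNReal.ofReal_le_ofReal (hvarle p)
  have hconv := ae_tendsto_sub_integral_cofinite_of_tsum_evariance_ne_top
    (fun p : ℕ × ℕ => (hYmem (a p.1, a p.2)).aestronglyMeasurable.aemeasurable) hsum
  filter_upwards [hconv, ae_all_iff.mpr hbdd] with ω hω hM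
  have hmean : ∀ k, |∫ ω', η k ω' ∂ℙ| ≤ M := fun k => by
    simpa using norm_integral_le_of_norm_le_const (μ := ℙ) (f := η k) (hbdd k)
  refine tendsto_logAverage_of_tendsto_subseq (C := M + M) (a := a)
    (fun k => (abs_sub _ _).trans (add_le_add (hM k) (hmean k)))
    (fun i j hij => expExpSeq_mono hd0 (by omega))
    ((tendsto_add_atTop_iff_nat (N + 1)).mpr (tendsto_expExpSeq hd0))
    (fun j => one_lt_expExpSeq d _) ?_ ?_
  · have := (tendsto_add_atTop_iff_nat (N + 1)).mpr (tendsto_log_expExpSeq_ratio hd0 hd1)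
    refine this.congr fun j => ?_
    simp only [ha, Nat.add_right_comm]
  · simpa only [hYcentered] using hω.mono_left atTop_le_cofinite

end RandomFieldMissing
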